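/- arXiv:1703.03516 — 7 statements merged into one kernel-verified Lean document; each statement's English description precedes it below -/
import Mathlib

section
/- Let p be an odd prime, k an algebraically closed field of characteristic p, and g an integer with g ≥ p. For every squarefree polynomial f(x) = Σ_{i=1}^{2g+1} c_i x^i in k[x] with c_{2g+1} = 1 (so f is monic of degree 2g+1 and f(0) = 0), the g×g Cartier–Manin matrix A = [a_{ij}] with a_{ij} = κ_{pi−j}, where f(x)^{(p−1)/2} = Σ_m κ_m x^m and κ_m = 0 for m < 0, does not have rank 1. (Equivalently: there are no smooth hyperelliptic curves of genus g ≥ p over k whose a-number equals g−1.) -/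
open Polynomial

theorem aux_rank {k : Type*} [Field k] {g : ℕ} (A : Matrix (Fin g) (Fin g) k) (h : A.rank = 1) :
    ∃ v w : Fin g → k, ∀ i j, A i j = w j * v i := by
  unfold Matrix.rank at h
  obtain ⟨v, -, hv⟩ := finrank_eq_one_iff'.mp h
  have : ∀ j, ∃ c : k, ∀ i, A i j = c * v.1 i := by
    intro j
    obtain ⟨c, hc⟩ := hv ⟨A.mulVecLin (Pi.single j 1), ⟨_, rfl⟩⟩
    refine ⟨c, fun i => ?_⟩
    have := congrFun (congrArg Subtype.val hc) i
    simpa using this.symm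
  choose w hw using this
  exact ⟨v.1, w, fun i j => hw j i⟩

theorem aux_sq {k : Type*} [Field k] [IsAlgClosed k] (f u W : k[X]) (n p : ℕ) (hnp : n < p)
    (hsq : Squarefree f) (hW : f ^ n = u * W ^ p) : W.degree ≤ 0 := by
  by_contra hd
  obtain ⟨a, ha⟩ := IsAlgClosed.exists_root W (fun h => hd (by rw [h]))
  have hpr : Prime (X - C a) := prime_X_sub_C a
  have h1 : (X - C a) ^ p ∣ f ^ n := by
    rw [hW]
    exact Dvd.dvd.mul_left (pow_dvd_pow_of_dvd (dvd_iff_isRoot.mpr ha) p) u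
  have h2 : (X - C a) ∣ f :=
    hpr.dvd_of_dvd_pow ((dvd_pow_self _ (by omega)).trans h1)
  obtain ⟨q, rfl⟩ := h2
  obtain ⟨d, rfl⟩ : ∃ d, p = n + (d + 1) := ⟨p - n - 1, by omega⟩
  rw [mul_pow, pow_add, mul_dvd_mul_iff_left (pow_ne_zero _ hpr.ne_zero)] at h1
  have h3 : (X - C a) ∣ q :=
    hpr.dvd_of_dvd_pow ((dvd_pow_self _ (by omega)).trans h1)
  exact hpr.not_unit (hsq _ (mul_dvd_mul_left _ h3))

theorem aux_decomp {k : Type*} [Field k] (F : k[X]) (p g : ℕ) (hF : F.natDegree < g * p)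
    (v : Fin g → k) (r : Fin p → k)
    (h : ∀ (i : Fin g) (s : Fin p), F.coeff (s + p * i) = r s * v i) :
    F = (∑ s, C (r s) * X ^ (s : ℕ)) * expand k p (∑ i, C (v i) * X ^ (i : ℕ)) := by
  conv_lhs => rw [F.as_sum_range_C_mul_X_pow' hF]
  rw [Finset.sum_range, ← finProdFinEquiv.sum_comp, Fintype.sum_prod_type_right,
    map_sum, Finset.sum_mul_sum]
  refine Finset.sum_congr rfl fun s _ => Finset.sum_congr rfl fun i _ => ?_
  simp only [finProdFinEquiv_apply_val, h, map_mul, expand_C, map_pow, expand_X, pow_add, pow_mul]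
  ring

/-- There are no smooth hyperelliptic curves of genus `g ≥ p` over an algebraically
closed field of characteristic `p` (odd prime) with `a`-number `g - 1`; equivalently,
the Cartier–Manin matrix of a squarefree `f` never has rank one. -/
theorem no_hyperelliptic_aNumber_g_sub_one_of_p_le_genus
    (p : ℕ) (hp : p.Prime) (hodd : Odd p)
    (k : Type*) [Field k] [IsAlgClosed k] [CharP k p]
    (g : ℕ) (hg : p ≤ g)
    (c : ℕ → k) (hclead : c (2 * g + 1) = 1)
    (f : k[X]) (hf : f = ∑ i ∈ Finset.Icc 1 (2 * g + 1), C (c i) * X ^ i)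
    (hsqf : Squarefree f)
    (A : Matrix (Fin g) (Fin g) k)
    (hA : ∀ i j : Fin g,
      A i j = (f ^ ((p - 1) / 2)).coeff (p * ((i : ℕ) + 1) - ((j : ℕ) + 1))) :
    A.rank ≠ 1 := by
  intro hr
  obtain ⟨v, w, hvw⟩ := aux_rank A hr
  have : Fact p.Prime := ⟨hp⟩
  obtain ⟨n, hn⟩ := hodd
  have hp2 := hp.two_le
  have hn2 : (p - 1) / 2 = n := by omega
  rw [hn2] at hA
  have hdeg : f.natDegree = 2 * g + 1 := by
    apply natDegree_eq_of_le_of_coeff_ne_zero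
    · rw [hf]
      refine natDegree_sum_le_of_forall_le _ _ fun i hi => ?_
      exact (natDegree_C_mul_X_pow_le _ _).trans (Finset.mem_Icc.mp hi).2
    · rw [hf]
      simp [coeff_X_pow, hclead]
  have hFdeg : (f ^ n).natDegree = n * (2 * g + 1) := by rw [natDegree_pow, hdeg]
  have hlt : (f ^ n).natDegree < g * p := by
    rw [hFdeg, hn]; nlinarith
  have key := aux_decomp (f ^ n) p g hlt v (fun s => w ⟨p - 1 - s, by omega⟩) (by
    intro i s
    rw [← hvw, hA]
    congr 1
    have := s.2
    rw [mul_add]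
    dsimp only
    omega)
  rw [polynomial_expand_eq] at key
  have hW := aux_sq _ _ _ n p (by omega) hsqf key
  rw [eq_C_of_degree_le_zero hW, ← C_pow] at key
  have h1 : (f ^ n).natDegree ≤ p - 1 := by
    rw [key]
    refine (natDegree_mul_C_le _ _).trans ?_
    refine natDegree_sum_le_of_forall_le _ _ fun i hi => ?_
    refine (natDegree_C_mul_X_pow_le _ _).trans ?_
    have := i.2
    omega
  rw [hFdeg] at h1
  have : n * 3 ≤ n * (2 * g + 1) := Nat.mul_le_mul_left _ (by omega)
  have : n ≠ 0 := by rintro rfl; exact hp.one_lt.ne' (by omega)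
  omega
end

section
/- Let p be an odd prime, k an algebraically closed field of characteristic p, and g an integer with g > p. Let f(x) = Σ_{i=1}^{2g+1} c_i x^i in k[x] with c_{2g+1} = 1, and let A be the g×g matrix with entries a_{ij} = κ_{pi−j}, where f(x)^{(p−1)/2} = Σ_m κ_m x^m (κ_m = 0 for m < 0). If rank(A) = 1, then c_1 = 0; consequently x² divides f and f is not squarefree. -/
open Polynomial

/-- For `g > p`, if the Cartier–Manin matrix of `f` has rank one then `c 1 = 0`;
consequently `X ^ 2 ∣ f` and `f` is not squarefree. -/
theorem c_one_eq_zero_of_rank_one_of_p_lt_genus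
    (p : ℕ) (hp : p.Prime) (hodd : Odd p)
    (k : Type*) [Field k] [IsAlgClosed k] [CharP k p]
    (g : ℕ) (hg : p < g)
    (c : ℕ → k) (hclead : c (2 * g + 1) = 1)
    (f : k[X]) (hf : f = ∑ i ∈ Finset.Icc 1 (2 * g + 1), C (c i) * X ^ i)
    (A : Matrix (Fin g) (Fin g) k)
    (hA : ∀ i j : Fin g,
      A i j = (f ^ ((p - 1) / 2)).coeff (p * ((i : ℕ) + 1) - ((j : ℕ) + 1)))
    (hrank : A.rank = 1) :
    c 1 = 0 ∧ X ^ 2 ∣ f ∧ ¬ Squarefree f := by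
  have hfac : ∃ h : k[X], f = X * h ∧ h.coeff 0 = c 1 := by
    refine ⟨∑ i ∈ Finset.Icc 1 (2 * g + 1), C (c i) * X ^ (i - 1), ?_, ?_⟩
    · rw [hf, Finset.mul_sum]
      refine Finset.sum_congr rfl fun i hi => ?_
      obtain ⟨j, rfl⟩ : ∃ j, i = j + 1 := ⟨i - 1, by have := (Finset.mem_Icc.1 hi).1; omega⟩
      simp only [Nat.add_sub_cancel]
      ring
    · rw [finset_sum_coeff, Finset.sum_eq_single 1]
      · simp
      · intro i hi hi1
        have := (Finset.mem_Icc.1 hi).1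
        rw [coeff_C_mul, coeff_X_pow, if_neg (by omega), mul_zero]
      · intro h
        exact absurd (Finset.mem_Icc.2 ⟨le_rfl, by omega⟩) h
  obtain ⟨h, hfh, hh0⟩ := hfac
  have hdeg : f.natDegree ≤ 2 * g + 1 := by
    rw [hf]
    refine natDegree_sum_le_of_forall_le _ _ fun i hi => ?_
    exact (natDegree_C_mul_X_pow_le _ _).trans (Finset.mem_Icc.1 hi).2
  have hlead : f.coeff (2 * g + 1) = 1 := by
    rw [hf, finset_sum_coeff, Finset.sum_eq_single (2 * g + 1)]
    · simp [hclead]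
    · intro i hi hi1
      rw [coeff_C_mul, coeff_X_pow, if_neg (Ne.symm hi1), mul_zero]
    · intro h
      exact absurd (Finset.mem_Icc.2 ⟨by omega, le_rfl⟩) h
  obtain ⟨n, hn⟩ := hodd
  have hn2 : (p - 1) / 2 = n := by omega
  rw [hn2] at hA
  have h1 : A ⟨0, by omega⟩ ⟨n, by omega⟩ = c 1 ^ n := by
    rw [hA]
    have : p * (0 + 1) - (n + 1) = 0 + n := by omega
    simp only [this]
    rw [hfh, mul_pow, coeff_X_pow_mul, coeff_zero_eq_eval_zero, eval_pow,
      ← coeff_zero_eq_eval_zero, hh0]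
  have h2 : A ⟨0, by omega⟩ ⟨g - n - 1, by omega⟩ = 0 := by
    rw [hA, hfh, mul_pow, coeff_X_pow_mul', if_neg]
    have := hp.two_le
    simp only
    omega
  have h3 : A ⟨g - 1, by omega⟩ ⟨g - n - 1, by omega⟩ = 1 := by
    rw [hA]
    have : p * (g - 1 + 1) - (g - n - 1 + 1) = n * (2 * g + 1) := by
      have e1 : g - 1 + 1 = g := by omega
      have e2 : g - n - 1 + 1 = g - n := by omega
      have e3 : p * g = n * (2 * g + 1) + (g - n) := by
        obtain ⟨d, rfl⟩ : ∃ d, g = n + d := ⟨g - n, by omega⟩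
        rw [Nat.add_sub_cancel_left, hn]
        ring
      rw [e1, e2, e3, Nat.add_sub_cancel]
    simp only [this]
    rw [coeff_pow_of_natDegree_le hdeg, hlead, one_pow]
  have hminor : ∀ i i' j j' : Fin g, A i j * A i' j' = A i j' * A i' j := by
    intro i i' j j'
    rw [Matrix.rank_eq_finrank_span_cols] at hrank
    obtain ⟨v, -, hv⟩ := finrank_eq_one_iff'.1 hrank
    have key : ∀ j, ∃ a : k, ∀ i, a * (v : Fin g → k) i = A i j := by
      intro j
      obtain ⟨a, ha⟩ := hv ⟨A.col j, Submodule.subset_span ⟨j, rfl⟩⟩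
      refine ⟨a, fun i => ?_⟩
      have := congrFun (congrArg Subtype.val ha) i
      simpa using this
    obtain ⟨a, ha⟩ := key j
    obtain ⟨b, hb⟩ := key j'
    rw [← ha, ← ha, ← hb, ← hb]
    ring
  have hc : c 1 = 0 := by
    have := hminor ⟨0, by omega⟩ ⟨g - 1, by omega⟩ ⟨n, by omega⟩ ⟨g - n - 1, by omega⟩
    rw [h1, h2, h3, mul_one, zero_mul] at this
    exact eq_zero_of_pow_eq_zero this
  have hX : X ^ 2 ∣ f := by
    rw [hfh, pow_two]
    exact mul_dvd_mul_left _ (X_dvd_iff.2 (hh0.trans hc))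
  refine ⟨hc, hX, fun hs => ?_⟩
  exact not_isUnit_X (hs X (by rwa [← pow_two]))
end

section
/- Let p be an odd prime and k an algebraically closed field of characteristic p. Let g = p and let f(x) = Σ_{i=1}^{2p+1} c_i x^i in k[x] with c_{2p+1} = 1 and c_1 ≠ 0, and let A be the p×p matrix with entries a_{ij} = κ_{pi−j}, where f(x)^{(p−1)/2} = Σ_m κ_m x^m. If rank(A) = 1, then κ_j = 0 for every index j not congruent to (p−1)/2 modulo p; that is, f(x)^{(p−1)/2} = x^{(p−1)/2} · h(x^p) for some polynomial h ∈ k[x]. -/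
open Polynomial

/-- For `g = p`, `c 1 ≠ 0`: if the Cartier–Manin matrix has rank one, then `κ_j = 0`
for every `j` not congruent to `(p-1)/2 mod p`; that is,
`f ^ ((p-1)/2) = X ^ ((p-1)/2) * h(X^p)` for some polynomial `h`. -/
theorem coeff_vanish_of_rank_one_genus_eq_p
    (p : ℕ) (hp : p.Prime) (hodd : Odd p)
    (k : Type*) [Field k] [IsAlgClosed k] [CharP k p]
    (c : ℕ → k) (hclead : c (2 * p + 1) = 1) (hc1 : c 1 ≠ 0)
    (f : k[X]) (hf : f = ∑ i ∈ Finset.Icc 1 (2 * p + 1), C (c i) * X ^ i)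
    (A : Matrix (Fin p) (Fin p) k)
    (hA : ∀ i j : Fin p,
      A i j = (f ^ ((p - 1) / 2)).coeff (p * ((i : ℕ) + 1) - ((j : ℕ) + 1)))
    (hrank : A.rank = 1) :
    (∀ j : ℕ, j % p ≠ (p - 1) / 2 → (f ^ ((p - 1) / 2)).coeff j = 0) ∧
    ∃ h : k[X], f ^ ((p - 1) / 2) = X ^ ((p - 1) / 2) * h.comp (X ^ p) := by
  have h3 : 3 ≤ p := by
    have := hp.two_le
    rcases hodd with ⟨m, hm⟩
    omega
  obtain ⟨n, hn⟩ : ∃ n, p = 2 * n + 1 := hodd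
  have hn' : (p - 1) / 2 = n := by omega
  rw [hn']
  obtain ⟨q, hfq, hq0⟩ : ∃ q : k[X], f = X * q ∧ q.coeff 0 = c 1 := by
    have h0 : f.coeff 0 = 0 := by
      rw [hf, finsetSum_coeff]
      refine Finset.sum_eq_zero fun i hi => ?_
      have := (Finset.mem_Icc.1 hi).1
      rw [coeff_C_mul, coeff_X_pow, if_neg (by omega), mul_zero]
    obtain ⟨q, hq⟩ := X_dvd_iff.2 h0
    refine ⟨q, hq, ?_⟩
    have h1 : f.coeff 1 = c 1 := by
      rw [hf, finsetSum_coeff, Finset.sum_eq_single 1]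
      · simp
      · intro i _ hi
        rw [coeff_C_mul, coeff_X_pow, if_neg (by omega), mul_zero]
      · intro h
        exact absurd (Finset.mem_Icc.2 ⟨le_refl _, by omega⟩) h
    rw [← h1, hq, coeff_X_mul]
  have hdeg : f.natDegree ≤ 2 * p + 1 := by
    rw [hf]
    refine natDegree_sum_le_of_forall_le _ _ fun i hi => ?_
    exact (natDegree_C_mul_X_pow_le _ _).trans (Finset.mem_Icc.1 hi).2
  have hlead : f.coeff (2 * p + 1) = 1 := by
    rw [hf, finsetSum_coeff, Finset.sum_eq_single (2 * p + 1)]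
    · simp [hclead]
    · intro i _ hi
      rw [coeff_C_mul, coeff_X_pow, if_neg (by omega), mul_zero]
    · intro h
      exact absurd (Finset.mem_Icc.2 ⟨by omega, le_refl _⟩) h
  have hFdeg : (f ^ n).natDegree ≤ n * (2 * p + 1) := natDegree_pow_le_of_le n hdeg
  have hFlead : (f ^ n).coeff (n * (2 * p + 1)) = 1 := by
    rw [coeff_pow_of_natDegree_le hdeg, hlead, one_pow]
  have hF : f ^ n = X ^ n * q ^ n := by rw [hfq, mul_pow]
  have hFlow : ∀ j < n, (f ^ n).coeff j = 0 := by
    intro j hj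
    rw [hF, coeff_X_pow_mul', if_neg (by omega)]
  have hFn : (f ^ n).coeff n ≠ 0 := by
    rw [hF, coeff_X_pow_mul', if_pos le_rfl, Nat.sub_self, coeff_zero_eq_eval_zero, eval_pow,
      ← coeff_zero_eq_eval_zero, hq0]
    exact pow_ne_zero _ hc1
  have hentry : ∀ (i r : ℕ) (hi : i < p) (hr : r < p),
      A ⟨i, hi⟩ ⟨p - 1 - r, by omega⟩ = (f ^ n).coeff (p * i + r) := by
    intro i r hi hr
    rw [hA, hn']
    have he : p * (i + 1) - (p - 1 - r + 1) = p * i + r := by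
      rw [Nat.mul_add]
      omega
    exact congrArg _ he
  have hminor : ∀ i i' j j' : Fin p, A i j * A i' j' = A i j' * A i' j := by
    intro i i' j j'
    have hr : Module.finrank k (Submodule.span k (Set.range A.row)) = 1 := by
      rw [← Matrix.rank_eq_finrank_span_row, hrank]
    obtain ⟨v, _, hv⟩ := finrank_eq_one_iff'.1 hr
    obtain ⟨a, ha⟩ := hv ⟨A.row i, Submodule.subset_span ⟨i, rfl⟩⟩
    obtain ⟨b, hb⟩ := hv ⟨A.row i', Submodule.subset_span ⟨i', rfl⟩⟩
    have ha' : ∀ l, A i l = a * v.1 l := fun l =>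
      (congrFun (congrArg Subtype.val ha) l).symm
    have hb' : ∀ l, A i' l = b * v.1 l := fun l =>
      (congrFun (congrArg Subtype.val hb) l).symm
    rw [ha', ha', hb', hb']
    ring
  have key : ∀ (i₀ i r : ℕ) (_ : i₀ < p) (_ : i < p) (_ : r < p),
      (f ^ n).coeff (p * i₀ + n) ≠ 0 → (f ^ n).coeff (p * i₀ + r) = 0 →
      (f ^ n).coeff (p * i + r) = 0 := by
    intro i₀ i r h0 hi hr hne hz
    have hm := hminor ⟨i₀, h0⟩ ⟨i, hi⟩ ⟨p - 1 - n, by omega⟩ ⟨p - 1 - r, by omega⟩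
    rw [hentry i₀ n h0 (by omega), hentry i r hi hr, hentry i₀ r h0 hr, hz, zero_mul] at hm
    exact (mul_eq_zero.1 hm).resolve_left hne
  have htop : n * (2 * p + 1) = p * (p - 1) + n := by
    have : p - 1 = 2 * n := by omega
    rw [this]; ring
  have main : ∀ j : ℕ, j % p ≠ n → (f ^ n).coeff j = 0 := by
    intro j hj
    have hrp : j % p < p := Nat.mod_lt _ (by omega)
    have hdm := Nat.div_add_mod j p
    by_cases hjp : j / p < p
    · rw [← hdm]
      rcases lt_or_gt_of_ne hj with h | h
      · refine key 0 _ _ (by omega) hjp hrp ?_ ?_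
        · simpa using hFn
        · simpa using hFlow _ h
      · refine key (p - 1) _ _ (by omega) hjp hrp ?_ ?_
        · rw [← htop, hFlead]; exact one_ne_zero
        · exact coeff_eq_zero_of_natDegree_lt (by omega)
    · refine coeff_eq_zero_of_natDegree_lt ?_
      have h1 : p * p ≤ p * (j / p) := Nat.mul_le_mul_left _ (by omega)
      have h2 : p * p = p * (p - 1) + p := by
        conv_lhs => rw [show p * p = p * (p - 1 + 1) by congr 1; omega]
        ring
      omega
  refine ⟨main, contract p (q ^ n), ?_⟩
  rw [← expand_eq_comp_X_pow, hF]
  congr 1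
  ext j
  rw [coeff_expand (by omega)]
  split_ifs with hd
  · rw [coeff_contract (by omega), Nat.div_mul_cancel hd]
  · have := main (j + n)
    rw [hF, coeff_X_pow_mul] at this
    refine this fun hc => hd ?_
    have h1 : j + n ≡ 0 + n [MOD p] := by
      rw [Nat.ModEq, hc, zero_add, Nat.mod_eq_of_lt (by omega)]
    exact (Nat.modEq_zero_iff_dvd).1 (Nat.ModEq.add_right_cancel' n h1)
end

section
/- Let k be an algebraically closed field of characteristic 5. For every squarefree polynomial f(x) = Σ_{i=1}^{9} c_i x^i ∈ k[x] with c_9 = 1, the 4×4 matrix A with entries a_{ij} = κ_{5i−j}, where f(x)² = Σ_m κ_m x^m, does not have rank 1. (Equivalently: there are no smooth hyperelliptic curves of genus 4 with a-number 3 over a field of characteristic 5.) -/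
open Polynomial

/-- The coefficient elimination: the rank one conditions force a one-parameter family. -/
theorem elim_aux {k : Type*} [Field k] (h5 : (5 : k) = 0)
    (a1 a2 a3 a4 a5 a6 a7 t l0 l1 l2 : k) (h1 : a1 ≠ 0)
    (e4 : 2 * (a1 * a3) + a2 ^ 2 = 0)
    (e3 : 2 * (a1 * a2) = l0)
    (e2 : a1 ^ 2 = l0 * (2 * t))
    (e1 : 0 = l0 * (2 * a7 + t ^ 2))
    (e9 : 2 * (a1 * t + a2 * a7 + a3 * a6 + a4 * a5) = 0)
    (e8 : 2 * (a1 * a7 + a2 * a6 + a3 * a5) + a4 ^ 2 = l1)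
    (e7 : 2 * (a1 * a6 + a2 * a5 + a3 * a4) = l1 * (2 * t))
    (e6 : 2 * (a1 * a5 + a2 * a4) + a3 ^ 2 = l1 * (2 * a7 + t ^ 2))
    (e14 : 2 * (a5 + t * a6) + a7 ^ 2 = 0)
    (e13 : 2 * (a4 + t * a5 + a7 * a6) = l2)
    (e12 : 2 * (a3 + t * a4 + a7 * a5) + a6 ^ 2 = l2 * (2 * t))
    (e11 : 2 * (a2 + t * a3 + a7 * a4 + a6 * a5) = l2 * (2 * a7 + t ^ 2)) :
    a7 = 2 * t ^ 2 ∧ a6 = 3 * t ^ 3 ∧ a5 = 0 ∧ a3 = t * a4 ∧ a2 = 2 * t ^ 2 * a4 ∧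
      a1 = 3 * t ^ 3 * a4 := by
  have hl0 : l0 ≠ 0 := by
    rintro rfl
    apply h1
    have : a1 ^ 2 = 0 := by rw [e2]; ring
    exact pow_eq_zero_iff (two_ne_zero) |>.1 this
  have h16 : 2 * a7 + t ^ 2 = 0 := by
    rcases mul_eq_zero.1 e1.symm with h | h
    · exact absurd h hl0
    · exact h
  have ht : t ≠ 0 := by
    rintro rfl
    apply h1
    have : a1 ^ 2 = 0 := by rw [e2]; ring
    exact pow_eq_zero_iff (two_ne_zero) |>.1 this
  rw [h16] at e6 e11
  have ha7 : a7 = 2 * t ^ 2 := by linear_combination 3 * h16 - (a7 + t ^ 2) * h5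
  subst ha7
  have ha1 : a1 = - (a2 * t) := by
    apply mul_left_cancel₀ h1
    subst e3
    linear_combination e2 + a1 * a2 * t * h5
  have ha2 : a2 ≠ 0 := by
    rintro rfl
    apply h1; rw [ha1]; ring
  have h23 : a2 = 2 * t * a3 := by
    apply mul_left_cancel₀ ha2
    subst ha1
    linear_combination e4
  have ha3 : a3 ≠ 0 := by
    rintro rfl
    apply ha2; rw [h23]; ring
  subst h23
  have ha1' : a1 = 3 * t ^ 2 * a3 := by
    linear_combination ha1 - t ^ 2 * a3 * h5
  subst ha1'
  have h3 : a3 = t * a4 - t ^ 2 * a5 := by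
    apply mul_left_cancel₀ ha3
    linear_combination e6 + (-t ^ 2 * a3 * a5 - t * a3 * a4) * h5
  have h6 : t * a6 = - a5 - 2 * t ^ 4 := by
    linear_combination 3 * e14 + (-a5 - t * a6 - 2 * t ^ 4) * h5
  have hv : a5 = 0 := by
    have : a5 ^ 2 = 0 := by
      grobner
    exact pow_eq_zero_iff (two_ne_zero) |>.1 this
  subst hv
  have h6' : a6 = 3 * t ^ 3 := by
    apply mul_left_cancel₀ ht
    linear_combination h6 - t ^ 4 * h5
  refine ⟨rfl, h6', rfl, ?_, ?_, ?_⟩ <;> rw [h3] <;> ring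

set_option maxHeartbeats 4000000 in
theorem no_rank_one_char5_genus4
    (k : Type*) [Field k] [IsAlgClosed k] [CharP k 5]
    (c : ℕ → k) (hclead : c 9 = 1)
    (f : k[X]) (hf : f = ∑ i ∈ Finset.Icc 1 9, C (c i) * X ^ i)
    (A : Matrix (Fin 4) (Fin 4) k)
    (hA : ∀ i j : Fin 4,
      A i j = (f ^ 2).coeff (5 * ((i : ℕ) + 1) - ((j : ℕ) + 1)))
    (hsqf : Squarefree f) :
    A.rank ≠ 1 := by
  intro hr
  have h5 : (5 : k) = 0 := by exact_mod_cast CharP.cast_eq_zero k 5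
  have hco : ∀ n, f.coeff n = if n ∈ Finset.Icc 1 9 then c n else 0 := by
    intro n
    rw [hf]
    simp only [finsetSum_coeff, coeff_C_mul, coeff_X_pow, mul_ite, mul_one, mul_zero]
    rw [Finset.sum_ite_eq]
  have hexp : f = c 1 • X + c 2 • X ^ 2 + c 3 • X ^ 3 + c 4 • X ^ 4 + c 5 • X ^ 5 + c 6 • X ^ 6
      + c 7 • X ^ 7 + c 8 • X ^ 8 + X ^ 9 := by
    rw [hf]
    simp [Finset.sum_Icc_succ_top, hclead, smul_eq_C_mul]
  have h1 : c 1 ≠ 0 := by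
    intro h
    have hd : (X : k[X]) * X ∣ f := by
      refine ⟨c 2 • 1 + c 3 • X + c 4 • X ^ 2 + c 5 • X ^ 3 + c 6 • X ^ 4
        + c 7 • X ^ 5 + c 8 • X ^ 6 + X ^ 7, ?_⟩
      rw [hexp, h]
      simp only [smul_eq_C_mul, C_0]
      ring
    exact not_isUnit_X (hsqf _ hd)
  have hrow : ∀ i, ∃ l : k, l • A.row 3 = A.row i := by
    rw [Matrix.rank_eq_finrank_span_row] at hr
    have hm : ∀ i, A.row i ∈ Submodule.span k (Set.range A.row) := fun i =>
      Submodule.subset_span ⟨i, rfl⟩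
    have hne : (⟨A.row 3, hm 3⟩ : Submodule.span k (Set.range A.row)) ≠ 0 := by
      intro h
      have h' := congrFun (congrArg Subtype.val h) 1
      have : A 3 1 = 0 := h'
      rw [hA, pow_two, coeff_mul] at this
      simp [Finset.Nat.antidiagonal_succ, hco, hclead] at this
    intro i
    obtain ⟨l, hl⟩ := (finrank_eq_one_iff_of_nonzero' _ hne).1 hr ⟨A.row i, hm i⟩
    exact ⟨l, congrArg Subtype.val hl⟩
  have hent : ∀ i, ∃ l : k, ∀ j, A i j = l * A 3 j := by
    intro i
    obtain ⟨l, hl⟩ := hrow i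
    exact ⟨l, fun j => (congrFun hl j).symm⟩
  obtain ⟨l0, H0⟩ := hent 0
  obtain ⟨l1, H1⟩ := hent 1
  obtain ⟨l2, H2⟩ := hent 2
  simp only [hA, pow_two, coeff_mul] at H0 H1 H2
  have a0 := H0 0
  have a1 := H0 1
  have a2 := H0 2
  have a3 := H0 3
  have b0 := H1 0
  have b1 := H1 1
  have b2 := H1 2
  have b3 := H1 3
  have d0 := H2 0
  have d1 := H2 1
  have d2 := H2 2
  have d3 := H2 3
  clear H0 H1 H2
  simp [Finset.Nat.antidiagonal_succ, hco, hclead] at a0 a1 a2 a3 b0 b1 b2 b3 d0 d1 d2 d3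
  obtain ⟨q7, q6, q5, q3, q2, q1⟩ := elim_aux h5 (c 1) (c 2) (c 3) (c 4) (c 5) (c 6) (c 7) (c 8)
    l0 l1 l2 h1 (by linear_combination a0) (by linear_combination a1)
    (by linear_combination a2) (by grind)
    (by linear_combination b0) (by linear_combination b1)
    (by linear_combination b2) (by linear_combination b3)
    (by linear_combination d0) (by linear_combination d1)
    (by linear_combination d2) (by linear_combination d3)
  obtain ⟨z, hz⟩ := IsAlgClosed.exists_pow_nat_eq (c 4) (n := 5) (by norm_num)
  have hfrob : (X + C z) ^ 5 = X ^ 5 + C (c 4) := by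
    haveI : Fact (Nat.Prime 5) := ⟨by norm_num⟩
    rw [add_pow_char, ← C_pow, hz]
  have hd : (X + C z) * (X + C z) ∣ f := by
    refine ⟨(X + C z) ^ 3 * (X * (X ^ 3 + C (c 8) * X ^ 2 + 2 * C (c 8) ^ 2 * X
      + 3 * C (c 8) ^ 3)), ?_⟩
    have e : (X + C z) * (X + C z) * ((X + C z) ^ 3 * (X * (X ^ 3 + C (c 8) * X ^ 2
      + 2 * C (c 8) ^ 2 * X + 3 * C (c 8) ^ 3))) = (X + C z) ^ 5 * (X * (X ^ 3 + C (c 8) * X ^ 2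
      + 2 * C (c 8) ^ 2 * X + 3 * C (c 8) ^ 3)) := by ring
    rw [e, hfrob, hexp, q7, q6, q5, q3, q2, q1]
    simp only [smul_eq_C_mul, C_mul, C_pow, C_0, C_ofNat]
    ring
  have hu := hsqf _ hd
  have hn := natDegree_eq_zero_of_isUnit hu
  simp at hn
end

section
/- Let k be an algebraically closed field of characteristic 7. For every squarefree polynomial f(x) = Σ_{i=1}^{13} c_i x^i ∈ k[x] with c_13 = 1, the 6×6 matrix A with entries a_{ij} = κ_{7i−j}, where f(x)³ = Σ_m κ_m x^m, does not have rank 1. (Equivalently: there are no smooth hyperelliptic curves of genus 6 with a-number 5 over a field of characteristic 7.) -/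
open Polynomial

theorem rank_one_minor {k : Type*} [Field k] {n : ℕ} (A : Matrix (Fin n) (Fin n) k)
    (h : A.rank = 1) (i i' j j' : Fin n) : A i j * A i' j' = A i j' * A i' j := by
  rw [Matrix.rank, finrank_eq_one_iff'] at h
  obtain ⟨v, -, hv⟩ := h
  have key : ∀ j, ∃ a : k, ∀ i, A i j = a * (v : Fin n → k) i := by
    intro j
    obtain ⟨a, ha⟩ := hv ⟨A.mulVecLin (Pi.single j 1), LinearMap.mem_range_self _ _⟩
    refine ⟨a, fun i => ?_⟩
    have := congrFun (congrArg Subtype.val ha) i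
    simpa using this.symm
  obtain ⟨a, ha⟩ := key j
  obtain ⟨b, hb⟩ := key j'
  rw [ha, ha, hb, hb]; ring

theorem exists_seventh {k : Type*} [Field k] [IsAlgClosed k] [CharP k 7] (κ : ℕ → k) :
    ∃ b : k[X], b.natDegree ≤ 5 ∧ b ^ 7 = ∑ j ∈ Finset.range 6, C (κ j) * X ^ (7 * j) := by
  have : Fact (Nat.Prime 7) := ⟨by norm_num⟩
  choose s hs using fun j => IsAlgClosed.exists_pow_nat_eq (κ j) (n := 7) (by norm_num)
  refine ⟨∑ j ∈ Finset.range 6, C (s j) * X ^ j, ?_, ?_⟩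
  · apply natDegree_sum_le_of_forall_le
    intro j hj
    exact (natDegree_C_mul_X_pow_le _ _).trans (by have := Finset.mem_range.1 hj; omega)
  · rw [sum_pow_char 7]
    refine Finset.sum_congr rfl fun j _ => ?_
    rw [mul_pow, ← C_pow, hs, ← pow_mul, mul_comm j]

theorem no_rank_one_char7_genus6
    (k : Type*) [Field k] [IsAlgClosed k] [CharP k 7]
    (c : ℕ → k) (hclead : c 13 = 1)
    (f : k[X]) (hf : f = ∑ i ∈ Finset.Icc 1 13, C (c i) * X ^ i)
    (A : Matrix (Fin 6) (Fin 6) k)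
    (hA : ∀ i j : Fin 6,
      A i j = (f ^ 3).coeff (7 * ((i : ℕ) + 1) - ((j : ℕ) + 1)))
    (hsqf : Squarefree f) :
    A.rank ≠ 1 := by
  intro hr
  have hmin := rank_one_minor A hr
  have h7 : (7 : k) = 0 := by exact_mod_cast CharP.cast_eq_zero k 7
  have hdeg : f.natDegree ≤ 13 := by
    rw [hf]
    apply natDegree_sum_le_of_forall_le
    intro j hj
    exact (natDegree_C_mul_X_pow_le _ _).trans (Finset.mem_Icc.1 hj).2
  have hcoeff : ∀ n ∈ Finset.Icc 1 13, f.coeff n = c n := by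
    intro n hn
    rw [hf, finsetSum_coeff]
    simp only [coeff_C_mul, coeff_X_pow, mul_ite, mul_one, mul_zero]
    rw [Finset.sum_ite_eq, if_pos hn]
  have hf13 : f.coeff 13 = 1 := by rw [hcoeff 13 (by simp), hclead]
  have hf0 : f.coeff 0 = 0 := by
    rw [hf, finsetSum_coeff]
    refine Finset.sum_eq_zero fun i hi => ?_
    have := (Finset.mem_Icc.1 hi).1
    rw [coeff_C_mul, coeff_X_pow, if_neg (by omega), mul_zero]
  obtain ⟨h, hh⟩ := X_dvd_iff.2 hf0
  have hh0 : h.coeff 0 ≠ 0 := by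
    intro h0
    obtain ⟨g, hg⟩ := X_dvd_iff.2 h0
    exact not_isUnit_X (hsqf X ⟨g, by rw [hh, hg, mul_assoc]⟩)
  have hdeg3 : (f ^ 3).natDegree ≤ 39 := natDegree_pow_le_of_le 3 hdeg
  set κ := (f ^ 3).coeff with hκ
  have k39 : κ 39 = 1 := by
    have := coeff_pow_of_natDegree_le (m := 3) hdeg
    rw [hκ]; simpa [hf13] using this
  have khi : ∀ n, 39 < n → κ n = 0 := fun n hn =>
    coeff_eq_zero_of_natDegree_lt (hdeg3.trans_lt hn)
  have hf3 : f ^ 3 = X ^ 3 * h ^ 3 := by rw [hh, mul_pow]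
  have klo : ∀ n, n < 3 → κ n = 0 := fun n hn => by
    rw [hκ, hf3, coeff_X_pow_mul', if_neg (by omega)]
  have k3 : κ 3 ≠ 0 := by
    rw [hκ, hf3, coeff_X_pow_mul', if_pos le_rfl]
    simp [coeff_zero_eq_eval_zero] at hh0 ⊢
    exact hh0
  have hA52 : A 5 2 = 1 := by rw [hA]; exact k39
  have hrow : ∀ i j, A i j = A i 2 * A 5 j := fun i j => by
    have := hmin i 5 j 2
    rwa [hA52, mul_one] at this
  have c0 : A 5 0 = 0 := by rw [hA]; exact khi 41 (by norm_num)
  have c1 : A 5 1 = 0 := by rw [hA]; exact khi 40 (by norm_num)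
  have a03 : A 0 3 ≠ 0 := by rw [hA]; exact k3
  have a02 : A 0 2 ≠ 0 := fun h => a03 (by rw [hrow, h, zero_mul])
  have c4 : A 5 4 = 0 := by
    have h1 : A 0 4 = 0 := by rw [hA]; exact klo 2 (by norm_num)
    rw [hrow] at h1
    exact (mul_eq_zero.1 h1).resolve_left a02
  have c5 : A 5 5 = 0 := by
    have h1 : A 0 5 = 0 := by rw [hA]; exact klo 1 (by norm_num)
    rw [hrow] at h1
    exact (mul_eq_zero.1 h1).resolve_left a02
  set t := A 5 3 with ht
  have e0 : ∀ i : Fin 6, κ (7 * ((i : ℕ) + 1) - 1) = 0 := fun i => by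
    have := hrow i 0; rw [c0, mul_zero, hA] at this; exact this
  have e1 : ∀ i : Fin 6, κ (7 * ((i : ℕ) + 1) - 2) = 0 := fun i => by
    have := hrow i 1; rw [c1, mul_zero, hA] at this; exact this
  have e4 : ∀ i : Fin 6, κ (7 * ((i : ℕ) + 1) - 5) = 0 := fun i => by
    have := hrow i 4; rw [c4, mul_zero, hA] at this; exact this
  have e5 : ∀ i : Fin 6, κ (7 * ((i : ℕ) + 1) - 6) = 0 := fun i => by
    have := hrow i 5; rw [c5, mul_zero, hA] at this; exact this
  have e3 : ∀ i : Fin 6, κ (7 * ((i : ℕ) + 1) - 4) = κ (7 * ((i : ℕ) + 1) - 3) * t := fun i => by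
    have := hrow i 3; rw [← ht, hA, hA] at this; exact this
  obtain ⟨a, -, ha⟩ := exists_seventh (fun j => κ (7 * j))
  obtain ⟨b, hbdeg, hb⟩ := exists_seventh (fun j => κ (7 * j + 4))
  have hb0 : b ≠ 0 := by
    rintro rfl
    have := congrArg (fun q => coeff q 35) hb
    simp [Finset.sum_range_succ, coeff_X_pow, k39] at this
  have main : f ^ 3 = a ^ 7 + X ^ 3 * (X + C t) * b ^ 7 := by
    rw [ha, hb, as_sum_range_C_mul_X_pow' (f ^ 3) (n := 42) (by omega)]
    simp only [← hκ]
    simp only [Fin.forall_fin_succ, Fin.val_zero, Fin.val_succ] at e0 e1 e3 e4 e5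
    norm_num at e0 e1 e3 e4 e5
    simp only [Finset.sum_range_succ, Finset.sum_range_zero, e0, e1, e3, e4, e5]
    norm_num [e0, e1, e3, e4, e5]
    ring
  have hder : 3 * f ^ 2 * derivative f = X ^ 2 * (4 * X + C (3 * t)) * b ^ 7 := by
    have := congrArg derivative main
    simp only [derivative_pow, derivative_add, derivative_mul, derivative_X, derivative_C] at this
    norm_num at this
    have e3p : (C 3 : k[X]) = 3 := rfl
    rw [h7, C_0, e3p] at this
    rw [this, C_mul, e3p]; ring
  have h4 : (4 : k) ≠ 0 := by
    intro h4
    have : (1 : k) = 0 := by linear_combination 2 * h4 - h7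
    exact one_ne_zero this
  have hL : (4 * X + C (3 * t) : k[X]) ≠ 0 := by
    intro h
    have := congrArg (fun q => coeff q 1) h
    have e : (4 : k[X]) = C 4 := rfl
    simp [e, coeff_C] at this
    exact h4 this
  have hLdeg : (4 * X + C (3 * t) : k[X]).natDegree ≤ 1 := by
    have e : (4 : k[X]) = C 4 := rfl
    rw [e]; exact natDegree_linear_le
  have hdvd : f ∣ (X * (4 * X + C (3 * t)) * b) ^ 7 := by
    have h1 : f ∣ X ^ 2 * (4 * X + C (3 * t)) * b ^ 7 := by
      rw [← hder]; exact ⟨3 * f * derivative f, by ring⟩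
    exact h1.trans ⟨X ^ 5 * (4 * X + C (3 * t)) ^ 6, by ring⟩
  have hdvd' : f ∣ X * (4 * X + C (3 * t)) * b := (hsqf.dvd_pow_iff_dvd (by norm_num)).1 hdvd
  have hle := natDegree_le_of_dvd hdvd' (mul_ne_zero (mul_ne_zero X_ne_zero hL) hb0)
  have h13 : 13 ≤ f.natDegree := le_natDegree_of_ne_zero (by rw [hf13]; exact one_ne_zero)
  have : (X * (4 * X + C (3 * t)) * b).natDegree ≤ 1 + 1 + 5 :=
    natDegree_mul_le_of_le (natDegree_mul_le_of_le natDegree_X_le hLdeg) hbdeg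
  omega
end

section
/- Let k be an algebraically closed field of characteristic 11. For every squarefree polynomial f(x) = Σ_{i=1}^{21} c_i x^i ∈ k[x] with c_21 = 1, the 10×10 matrix A with entries a_{ij} = κ_{11i−j}, where f(x)⁵ = Σ_m κ_m x^m, does not have rank 1. (Equivalently: there are no smooth hyperelliptic curves of genus 10 with a-number 9 over a field of characteristic 11.) -/
open Polynomial

/-- A matrix of rank one is an outer product. -/
theorem outer_of_rank_one {k : Type*} [Field k] (A : Matrix (Fin 10) (Fin 10) k)
    (h : A.rank = 1) : ∃ w s : Fin 10 → k, ∀ i j, A i j = w i * s j := by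
  have h1 : Module.finrank k (LinearMap.range A.mulVecLin) ≤ 1 := le_of_eq h
  rw [finrank_le_one_iff] at h1
  obtain ⟨w, hw⟩ := h1
  have h2 : ∀ j : Fin 10, ∃ c : k, ∀ i, A i j = w.1 i * c := by
    intro j
    obtain ⟨c, hc⟩ := hw ⟨A.mulVecLin (Pi.single j 1), LinearMap.mem_range_self _ _⟩
    refine ⟨c, fun i => ?_⟩
    have h3 := congrFun (congrArg Subtype.val hc) i
    simp at h3
    rw [← h3, mul_comm]
  choose s hs using h2
  exact ⟨w.1, s, fun i j => hs j i⟩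

theorem no_rank_one_char11_genus10
    (k : Type*) [Field k] [IsAlgClosed k] [CharP k 11]
    (c : ℕ → k) (hclead : c 21 = 1)
    (f : k[X]) (hf : f = ∑ i ∈ Finset.Icc 1 21, C (c i) * X ^ i)
    (A : Matrix (Fin 10) (Fin 10) k)
    (hA : ∀ i j : Fin 10,
      A i j = (f ^ 5).coeff (11 * ((i : ℕ) + 1) - ((j : ℕ) + 1)))
    (hsqf : Squarefree f) :
    A.rank ≠ 1 := by
  classical
  intro hrank
  obtain ⟨w, s, hws⟩ := outer_of_rank_one A hrank
  have hp11 : Fact (Nat.Prime 11) := ⟨by norm_num⟩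
  have h11 : (11 : k) = 0 := by exact_mod_cast CharP.cast_eq_zero k 11
  have hcoef : ∀ n, f.coeff n = if n ∈ Finset.Icc 1 21 then c n else 0 := by
    intro n
    rw [hf, finsetSum_coeff]
    simp only [coeff_C_mul, coeff_X_pow, mul_ite, mul_one, mul_zero]
    rw [Finset.sum_ite_eq]
  have hdeg : f.natDegree ≤ 21 := by
    rw [natDegree_le_iff_coeff_eq_zero]
    intro n hn
    rw [hcoef, if_neg]
    simp; omega
  have hc21 : f.coeff 21 = 1 := by rw [hcoef]; simp [hclead]
  have hmonic : f.Monic := monic_of_natDegree_le_of_coeff_eq_one 21 hdeg hc21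
  have hdeg21 : f.natDegree = 21 :=
    le_antisymm hdeg (le_natDegree_of_ne_zero (by rw [hc21]; exact one_ne_zero))
  have hf0 : f ≠ 0 := hmonic.ne_zero
  obtain ⟨h, hh⟩ : X ∣ f := by
    rw [X_dvd_iff, hcoef]; simp
  have hh0 : h.coeff 0 ≠ 0 := by
    intro h0
    obtain ⟨q, hq⟩ := X_dvd_iff.mpr h0
    exact not_isUnit_X (hsqf X ⟨q, by rw [hh, hq]; ring⟩)
  have hhne : h ≠ 0 := by rintro rfl; simp at hh0
  have hhdeg : h.natDegree = 20 := by
    rw [hh, natDegree_X_mul hhne] at hdeg21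
    omega
  have hf5 : f ^ 5 = h ^ 5 * X ^ 5 := by rw [hh]; ring
  have hm5 : (f ^ 5).Monic := hmonic.pow 5
  have hd5 : (f ^ 5).natDegree = 105 := by rw [natDegree_pow, hdeg21]
  have hA94 : w 9 * s 4 = 1 := by
    rw [← hws, hA]
    have := hm5.coeff_natDegree
    rw [hd5] at this
    exact this
  have hA05 : w 0 * s 5 ≠ 0 := by
    rw [← hws, hA]
    have : (f ^ 5).coeff 5 ≠ 0 := by
      rw [hf5, coeff_mul_X_pow' ]
      simp [coeff_zero_eq_eval_zero] at hh0 ⊢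
      exact hh0
    exact this
  have hw9 : w 9 ≠ 0 := left_ne_zero_of_mul_eq_one hA94
  have hw0 : w 0 ≠ 0 := left_ne_zero_of_mul hA05
  have hslow : ∀ j : Fin 10, (j : ℕ) < 4 → s j = 0 := by
    intro j hj
    have h1 : w 9 * s j = 0 := by
      rw [← hws, hA]
      apply coeff_eq_zero_of_natDegree_lt
      rw [hd5]
      show 105 < 11 * (9 + 1) - ((j : ℕ) + 1)
      omega
    exact (mul_eq_zero.mp h1).resolve_left hw9
  have hshigh : ∀ j : Fin 10, 5 < (j : ℕ) → s j = 0 := by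
    intro j hj
    have h1 : w 0 * s j = 0 := by
      rw [← hws, hA, hf5, coeff_mul_X_pow', if_neg]
      show ¬ 5 ≤ 11 * (0 + 1) - ((j : ℕ) + 1)
      omega
    exact (mul_eq_zero.mp h1).resolve_left hw0
  -- the key identity for the derivative
  let V : k[X] := ∑ i : Fin 10, C (w i) * X ^ (i : ℕ)
  have hV : ∀ n, V.coeff n = if hn : n < 10 then w ⟨n, hn⟩ else 0 := by
    intro n
    simp only [V, finsetSum_coeff, coeff_C_mul, coeff_X_pow, mul_ite, mul_one, mul_zero]
    split_ifs with hn
    · rw [Finset.sum_eq_single ⟨n, hn⟩]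
      · simp
      · intro b _ hb
        rw [if_neg]
        rintro rfl
        exact hb rfl
      · simp
    · apply Finset.sum_eq_zero
      intro i _
      rw [if_neg]
      omega
  let L : k[X] := C (6 * s 4) * X + C (5 * s 5)
  have hder : derivative (f ^ 5) = expand k 11 V * L * X ^ 4 := by
    have hL : expand k 11 V * L * X ^ 4
        = C (6 * s 4) * (expand k 11 V * X ^ 5) + C (5 * s 5) * (expand k 11 V * X ^ 4) := by
      simp only [L]; ring
    rw [hL]
    ext n
    rw [coeff_derivative, coeff_add, coeff_C_mul, coeff_C_mul, coeff_mul_X_pow', coeff_mul_X_pow',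
      coeff_expand (by norm_num), coeff_expand (by norm_num)]
    obtain ⟨q, r, hr, rfl⟩ : ∃ q r, r < 11 ∧ n = 11 * q + r :=
      ⟨n / 11, n % 11, Nat.mod_lt _ (by norm_num), (Nat.div_add_mod n 11).symm⟩
    have hcast : (((11 * q + r : ℕ) : k) + 1) = (r : k) + 1 := by
      push_cast; rw [h11]; ring
    rw [hcast]
    have e5 : (if 5 ≤ 11 * q + r then if 11 ∣ 11 * q + r - 5
        then V.coeff ((11 * q + r - 5) / 11) else 0 else 0) = if r = 5 then V.coeff q else 0 := by
      by_cases h5 : r = 5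
      · subst h5
        simp
      · rw [if_neg h5]
        split_ifs <;> first | rfl | omega
    have e4 : (if 4 ≤ 11 * q + r then if 11 ∣ 11 * q + r - 4
        then V.coeff ((11 * q + r - 4) / 11) else 0 else 0) = if r = 4 then V.coeff q else 0 := by
      by_cases h5 : r = 4
      · subst h5
        simp
      · rw [if_neg h5]
        split_ifs <;> first | rfl | omega
    rw [e5, e4]
    by_cases hr10 : r = 10
    · subst hr10
      have : ((10 : ℕ) : k) + 1 = 0 := by push_cast; rw [← h11]; norm_num
      rw [this]; simp
    by_cases hq : q < 10
    · have hj : 9 - r < 10 := by omega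
      have hk : (f ^ 5).coeff (11 * q + r + 1) = w ⟨q, hq⟩ * s ⟨9 - r, hj⟩ := by
        rw [← hws, hA]
        congr 1
        show 11 * q + r + 1 = 11 * (q + 1) - (9 - r + 1)
        omega
      rw [hk, hV, dif_pos hq]
      by_cases h5 : r = 5
      · subst h5
        have : s ⟨9 - 5, hj⟩ = s 4 := rfl
        rw [this]
        norm_num
        ring
      by_cases h4 : r = 4
      · subst h4
        have : s ⟨9 - 4, hj⟩ = s 5 := rfl
        rw [this]
        norm_num
        ring
      rw [if_neg h5, if_neg h4]
      have : s ⟨9 - r, hj⟩ = 0 := by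
        by_cases h6 : r < 4
        · apply hshigh; show 5 < 9 - r; omega
        · apply hslow; show 9 - r < 4; omega
      rw [this]; ring
    · have : (f ^ 5).coeff (11 * q + r + 1) = 0 := by
        apply coeff_eq_zero_of_natDegree_lt
        rw [hd5]; omega
      rw [this, hV, dif_neg hq]; simp
  -- a nonzero root of `f`
  obtain ⟨b, hb⟩ : ∃ b, h.IsRoot b := by
    apply IsAlgClosed.exists_root
    rw [degree_eq_natDegree hhne, hhdeg]
    norm_num
  have hb0 : b ≠ 0 := by
    rintro rfl
    exact hh0 (by rw [coeff_zero_eq_eval_zero]; exact hb)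
  have hfb : f.IsRoot b := by
    rw [IsRoot, hh, eval_mul, hb.eq_zero, mul_zero]
  have hsep : f.Separable := PerfectField.separable_iff_squarefree.mpr hsqf
  have hdb : ¬ (derivative f).IsRoot b := by
    have := hsep.eval₂_derivative_ne_zero (RingHom.id k) (x := b) hfb
    exact this
  have hd0 : derivative f ≠ 0 := by
    intro h0; rw [h0] at hdb; exact hdb (by simp)
  have hm1 : f.roots.count b = 1 := by
    apply le_antisymm
    · exact Multiset.nodup_iff_count_le_one.mp (nodup_roots hsep) b
    · rw [Nat.succ_le_iff, Multiset.count_pos]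
      exact (mem_roots hf0).mpr hfb
  have hfive : (5 : k) ≠ 0 := by
    intro h5
    have := (CharP.cast_eq_zero_iff k 11 5).mp (by exact_mod_cast h5)
    norm_num at this
  have hder' : derivative (f ^ 5) = C (5 : k) * (f ^ 4 * derivative f) := by
    rw [derivative_pow]; push_cast; norm_num; ring
  have hne1 : f ^ 4 * derivative f ≠ 0 := mul_ne_zero (pow_ne_zero _ hf0) hd0
  have hlhs : (derivative (f ^ 5)).roots.count b = 4 := by
    rw [hder', roots_C_mul _ hfive, roots_mul hne1, roots_pow, Multiset.count_add,
      Multiset.count_nsmul, hm1, Multiset.count_eq_zero.mpr]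
    rw [mem_roots hd0]; exact hdb
  have hne2 : derivative (f ^ 5) ≠ 0 := by
    rw [hder']; exact mul_ne_zero (C_ne_zero.mpr hfive) hne1
  rw [hder] at hlhs hne2
  have hne3 := left_ne_zero_of_mul hne2
  have hL1 : L.roots.count b ≤ 1 :=
    (Multiset.count_le_card _ _).trans ((card_roots' L).trans natDegree_linear_le)
  rw [roots_mul hne2, roots_mul hne3, polynomial_expand_eq, roots_pow, roots_pow,
    Multiset.count_add, Multiset.count_add, Multiset.count_nsmul, Multiset.count_nsmul,
    roots_X, Multiset.count_singleton, if_neg hb0] at hlhs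
  omega
end

section
/- Let p be an odd prime and k an algebraically closed field of characteristic p. Let f(x) = Σ_{i=1}^{2p+1} c_i x^i ∈ k[x] with c_{2p+1} = 1 and c_1 ≠ 0, and write f(x) = x·f̃(x). Let A be the p×p matrix with entries a_{ij} = κ_{pi−j}, where f(x)^{(p−1)/2} = Σ_m κ_m x^m. If rank(A) = 1, then there exists a polynomial h̃ ∈ k[x] of degree p−1 such that f̃(x)^{(p−1)/2} = h̃(x)^p; consequently f is not squarefree. -/
open Polynomial

theorem aux_rows {p : ℕ} {k : Type*} [Field k] (A : Matrix (Fin p) (Fin p) k) (h : A.rank = 1)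
    (i₀ : Fin p) (h0 : A i₀ ≠ 0) (i : Fin p) : ∃ t : k, ∀ j, A i j = t * A i₀ j := by
  rw [Matrix.rank_eq_finrank_span_row] at h
  have mem : ∀ i, A i ∈ Submodule.span k (Set.range A.row) := fun i =>
    Submodule.subset_span ⟨i, rfl⟩
  have h0' : (⟨A i₀, mem i₀⟩ : Submodule.span k (Set.range A.row)) ≠ 0 := by
    intro hh; exact h0 (congrArg Subtype.val hh)
  obtain ⟨t, ht⟩ := (finrank_eq_one_iff_of_nonzero' _ h0').1 h ⟨A i, mem i⟩
  refine ⟨t, fun j => ?_⟩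
  have := congrFun (congrArg Subtype.val ht) j
  simpa using this.symm

theorem aux_pow {p : ℕ} (hp : p.Prime) {k : Type*} [Field k] [IsAlgClosed k] [CharP k p]
    (G : k[X]) (hG : ∀ m, ¬ p ∣ m → G.coeff m = 0) : ∃ h : k[X], G = h ^ p := by
  haveI : Fact p.Prime := ⟨hp⟩
  have h1 : expand k p (contract p G) = G := by
    ext m
    rw [coeff_expand hp.pos]
    split_ifs with hm
    · rw [coeff_contract hp.ne_zero, Nat.div_mul_cancel hm]
    · exact (hG m hm).symm
  refine ⟨(contract p G).map ((frobeniusEquiv k p).symm : k →+* k), ?_⟩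
  rw [← map_frobenius_expand (p := p), map_expand, Polynomial.map_map]
  have : (frobenius k p).comp ((frobeniusEquiv k p).symm : k →+* k) = RingHom.id k := by
    ext x; simp
  rw [this, Polynomial.map_id, h1]

theorem aux_sqf {p n : ℕ} (hn : 0 < n) (hnp : n < p) {k : Type*} [Field k] [IsAlgClosed k]
    (g h : k[X]) (hg : 0 < g.natDegree) (e : g ^ n = h ^ p) : ¬ Squarefree g := by
  intro hs
  obtain ⟨a, ha⟩ := IsAlgClosed.exists_root g (by
    intro h0; rw [natDegree_eq_of_degree_eq_some h0] at hg; exact absurd hg (lt_irrefl _))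
  obtain ⟨u, rfl⟩ := dvd_iff_isRoot.2 ha
  have hpr : Prime (X - C a) := prime_X_sub_C a
  have h1 : (X - C a) ∣ h := by
    apply hpr.dvd_of_dvd_pow (n := p)
    rw [← e]
    exact dvd_pow (dvd_mul_right _ _) hn.ne'
  have h2 : (X - C a) ^ (n + 1) ∣ (X - C a) ^ n * u ^ n := by
    rw [← mul_pow, e]
    exact (pow_dvd_pow _ hnp).trans (pow_dvd_pow_of_dvd h1 p)
  rw [pow_succ, mul_dvd_mul_iff_left (pow_ne_zero _ hpr.ne_zero)] at h2
  exact hpr.not_unit (hs _ (mul_dvd_mul_left _ (hpr.dvd_of_dvd_pow h2)))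

theorem genus_p_rank_one_not_squarefree
    (p : ℕ) (hp : p.Prime) (hodd : Odd p)
    (k : Type*) [Field k] [IsAlgClosed k] [CharP k p]
    (c : ℕ → k) (hclead : c (2 * p + 1) = 1) (hc1 : c 1 ≠ 0)
    (f : k[X]) (hf : f = ∑ i ∈ Finset.Icc 1 (2 * p + 1), C (c i) * X ^ i)
    (ftil : k[X]) (hftil : f = X * ftil)
    (A : Matrix (Fin p) (Fin p) k)
    (hA : ∀ i j : Fin p,
      A i j = (f ^ ((p - 1) / 2)).coeff (p * ((i : ℕ) + 1) - ((j : ℕ) + 1)))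
    (hrank : A.rank = 1) :
    (∃ htil : k[X], htil.natDegree = p - 1 ∧ ftil ^ ((p - 1) / 2) = htil ^ p) ∧
    ¬ Squarefree f := by
  obtain ⟨n, hn⟩ := hodd
  have hn0 : 0 < n := by
    rcases Nat.eq_zero_or_pos n with h | h
    · subst h; simp at hn; subst hn; exact absurd hp (by norm_num)
    · exact h
  have hnn : (p - 1) / 2 = n := by omega
  rw [hnn] at hA ⊢
  have hp0 : 0 < p := hp.pos
  have hfc : ∀ m, f.coeff m = if 1 ≤ m ∧ m ≤ 2 * p + 1 then c m else 0 := by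
    intro m
    rw [hf, finset_sum_coeff]
    simp [coeff_C_mul, coeff_X_pow]
  have hgc : ∀ m, ftil.coeff m = if m ≤ 2 * p then c (m + 1) else 0 := by
    intro m
    rw [← coeff_X_mul, ← hftil, hfc]
    simp
  have hgdeg : ftil.natDegree = 2 * p := by
    apply natDegree_eq_of_le_of_coeff_ne_zero
    · rw [natDegree_le_iff_coeff_eq_zero]
      intro m hm
      rw [hgc, if_neg (by omega)]
    · rw [hgc]; simp [hclead]
  have hglead : ftil.coeff (2 * p) = 1 := by rw [hgc]; simp [hclead]
  set G := ftil ^ n with hGdef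
  have hGdeg : G.natDegree = n * (2 * p) := by rw [hGdef, natDegree_pow, hgdeg]
  have hG0 : G.coeff 0 ≠ 0 := by
    rw [hGdef, coeff_zero_eq_eval_zero, eval_pow, ← coeff_zero_eq_eval_zero, hgc]
    simpa using fun h => absurd h hc1
  have hne : G ≠ 0 := fun h => hG0 (by simp [h])
  have hGl : G.coeff (n * (2 * p)) ≠ 0 := by
    rw [← hGdeg]; simpa using hne
  have hF : f ^ n = X ^ n * G := by rw [hftil, mul_pow]
  -- block form
  have hB : ∀ i r : ℕ, ∀ hi : i < p, ∀ hr : r < p,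
      A ⟨i, hi⟩ ⟨p - 1 - r, by omega⟩ = if n ≤ p * i + r then G.coeff (p * i + r - n) else 0 := by
    intro i r hi hr
    rw [hA, hF, coeff_X_pow_mul']
    have : p * (i + 1) - (p - 1 - r + 1) = p * i + r := by
      rw [mul_add]; omega
    simp only [this]
  have hr0 : A ⟨0, hp0⟩ ≠ 0 := by
    intro h
    have := hB 0 n hp0 (by omega)
    rw [h] at this
    simp at this
    exact hG0 this.symm
  have hrow := aux_rows A hrank ⟨0, hp0⟩ hr0
  have hlow : ∀ r (hr : r < p), r < n → A ⟨0, hp0⟩ ⟨p - 1 - r, by omega⟩ = 0 := by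
    intro r hr hrn
    rw [hB 0 r hp0 hr, if_neg (by omega)]
  have hpn : p * (p - 1) = n * (2 * p) := by
    have : p - 1 = 2 * n := by omega
    rw [this]; ring
  have hhigh : ∀ r (hr : r < p), n < r → A ⟨0, hp0⟩ ⟨p - 1 - r, by omega⟩ = 0 := by
    intro r hr hrn
    obtain ⟨t, ht⟩ := hrow ⟨p - 1, by omega⟩
    have e1 := hB (p - 1) n (by omega) (by omega)
    have e2 := hB (p - 1) r (by omega) hr
    rw [ht, if_pos (by omega), hpn, Nat.add_sub_cancel] at e1
    rw [ht, if_pos (by omega), hpn, coeff_eq_zero_of_natDegree_lt (by omega)] at e2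
    rcases mul_eq_zero.1 e2 with h | h
    · rw [h, zero_mul] at e1; exact absurd e1.symm hGl
    · exact h
  have hvan : ∀ m, ¬ p ∣ m → G.coeff m = 0 := by
    intro m hm
    by_cases hmd : G.natDegree < m
    · exact coeff_eq_zero_of_natDegree_lt hmd
    have hdm := Nat.div_add_mod (m + n) p
    have hr := Nat.mod_lt (m + n) hp0
    have hi : (m + n) / p < p := by
      rw [Nat.div_lt_iff_lt_mul hp0]
      have : p * p = p * (p - 1) + p := by
        obtain ⟨q, rfl⟩ : ∃ q, p = q + 1 := ⟨p - 1, by omega⟩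
        simp; ring
      omega
    have e := hB _ _ hi hr
    obtain ⟨t, ht⟩ := hrow ⟨_, hi⟩
    rw [hdm, if_pos (by omega), Nat.add_sub_cancel, ht] at e
    rw [← e]
    rcases lt_trichotomy ((m + n) % p) n with h | h | h
    · rw [hlow _ hr h, mul_zero]
    · exact absurd ⟨(m + n) / p, by omega⟩ hm
    · rw [hhigh _ hr h, mul_zero]
  obtain ⟨h, hh⟩ := aux_pow hp G hvan
  refine ⟨⟨h, ?_, hh⟩, ?_⟩
  · have := congrArg natDegree hh
    rw [hGdeg, natDegree_pow, ← hpn] at this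
    exact (Nat.eq_of_mul_eq_mul_left hp0 this).symm
  · intro hs
    refine aux_sqf hn0 (by omega) ftil h (by omega) hh (hs.squarefree_of_dvd ?_)
    exact ⟨X, by rw [hftil, mul_comm]⟩
end
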